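/- For every integer k ≥ 1 there exists a constant c_k > 0 such that the following holds. Let H : ℕ → ℕ be any function with H(X) → ∞ as X → ∞ and H(X) ≤ X·(log X)^{−c_k} for all sufficiently large X. For integers x₁, x₂ let T(x₁, x₂) denote the number of tuples (n₁, …, n_{2k}; m₁, …, m_{2k}) of integers with x₁ < n_i ≤ x₁ + H(X) and x₂ < m_i ≤ x₂ + H(X) for all i, satisfying n₁⋯n_k·m₁⋯m_k = n_{k+1}⋯n_{2k}·m_{k+1}⋯m_{2k}. Then ( (1/X²) ∑_{x₁=1}^{X} ∑_{x₂=1}^{X} T(x₁, x₂) − k!²·H(X)^{2k} ) / H(X)^{2k} → 0 as X → ∞. -/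

import Mathlib

/-- `T(x₁, x₂)` (with interval length `Hv`): the number of tuples
`(n₁,…,n_{2k}; m₁,…,m_{2k})` with `n_i ∈ (x₁, x₁+Hv]`, `m_i ∈ (x₂, x₂+Hv]`, and
`n₁⋯n_k·m₁⋯m_k = n_{k+1}⋯n_{2k}·m_{k+1}⋯m_{2k}`.
Here `t.1 i = n_i`, `t.2.1 i = n_{k+i}`, `t.2.2.1 i = m_i`, `t.2.2.2 i = m_{k+i}`. -/
noncomputable def crossCount (k x₁ x₂ Hv : ℕ) : ℕ :=
  Nat.card {t : (Fin k → ℕ) × (Fin k → ℕ) × (Fin k → ℕ) × (Fin k → ℕ) //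
    (∀ i, t.1 i ∈ Finset.Ioc x₁ (x₁ + Hv)) ∧ (∀ i, t.2.1 i ∈ Finset.Ioc x₁ (x₁ + Hv)) ∧
    (∀ i, t.2.2.1 i ∈ Finset.Ioc x₂ (x₂ + Hv)) ∧ (∀ i, t.2.2.2 i ∈ Finset.Ioc x₂ (x₂ + Hv)) ∧
    (∏ i, t.1 i) * (∏ i, t.2.2.1 i) = (∏ i, t.2.1 i) * (∏ i, t.2.2.2 i)}

open Finset

/-- Solutions of `∏ nᵢ * ∏ mⱼ = ∏ n'ᵢ * ∏ m'ⱼ` with `k` variables `nᵢ, n'ᵢ ∈ I` and `l` variables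
`mⱼ, m'ⱼ ∈ J` on each side, as tuples `(n, n', m, m')`. -/
def prodSolutions (k l : ℕ) (I J : Finset ℕ) :
    Finset ((Fin k → ℕ) × (Fin k → ℕ) × (Fin l → ℕ) × (Fin l → ℕ)) :=
  ((Fintype.piFinset fun _ => I) ×ˢ (Fintype.piFinset fun _ => I) ×ˢ
    (Fintype.piFinset fun _ => J) ×ˢ (Fintype.piFinset fun _ => J)).filter fun t =>
      (∏ i, t.1 i) * (∏ i, t.2.2.1 i) = (∏ i, t.2.1 i) * (∏ i, t.2.2.2 i)

theorem mem_prodSolutions {k l : ℕ} {I J : Finset ℕ}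
    {t : (Fin k → ℕ) × (Fin k → ℕ) × (Fin l → ℕ) × (Fin l → ℕ)} :
    t ∈ prodSolutions k l I J ↔ (∀ i, t.1 i ∈ I) ∧ (∀ i, t.2.1 i ∈ I) ∧
      (∀ i, t.2.2.1 i ∈ J) ∧ (∀ i, t.2.2.2 i ∈ J) ∧
      (∏ i, t.1 i) * (∏ i, t.2.2.1 i) = (∏ i, t.2.1 i) * (∏ i, t.2.2.2 i) := by
  simp only [prodSolutions, mem_filter, mem_product, Fintype.mem_piFinset, and_assoc]

theorem crossCount_eq_card (k x₁ x₂ H : ℕ) :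
    crossCount k x₁ x₂ H =
      (prodSolutions k k (Ioc x₁ (x₁ + H)) (Ioc x₂ (x₂ + H))).card :=
  Nat.subtype_card _ fun _ => mem_prodSolutions

theorem card_prodSolutions_swap (k l : ℕ) (I J : Finset ℕ) :
    (prodSolutions k l I J).card = (prodSolutions l k J I).card := by
  refine Finset.card_nbij' (fun t => (t.2.2.1, t.2.2.2, t.1, t.2.1))
    (fun t => (t.2.2.1, t.2.2.2, t.1, t.2.1)) ?_ ?_ (fun _ _ => rfl) (fun _ _ => rfl) <;>
  · intro t ht
    simp only [mem_coe, mem_prodSolutions] at ht ⊢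
    obtain ⟨h1, h2, h3, h4, h5⟩ := ht
    exact ⟨h3, h4, h1, h2, by rw [mul_comm, h5, mul_comm]⟩

/-- Solutions in which `n'₀` differs from every `nᵢ`. -/
def unmatchedSolutions (k l : ℕ) (I J : Finset ℕ) :
    Finset ((Fin (k + 1) → ℕ) × (Fin (k + 1) → ℕ) × (Fin l → ℕ) × (Fin l → ℕ)) :=
  (prodSolutions (k + 1) l I J).filter fun t => ∀ i, t.1 i ≠ t.2.1 0

theorem card_filter_matched_le {k l : ℕ} {I J : Finset ℕ} (hI : 0 ∉ I) (i : Fin (k + 1)) :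
    ((prodSolutions (k + 1) l I J).filter fun t => t.1 i = t.2.1 0).card ≤
      I.card * (prodSolutions k l I J).card := by
  rw [← card_product]
  refine card_le_card_of_injOn
    (fun t => (t.1 i, (i.removeNth t.1, Fin.tail t.2.1, t.2.2.1, t.2.2.2))) ?_ ?_
  · rintro ⟨n, n', m, m'⟩ ht
    simp only [coe_filter, Set.mem_ofPred_eq, mem_prodSolutions] at ht
    obtain ⟨⟨h1, h2, h3, h4, h5⟩, h6⟩ := ht
    simp only [coe_product, Set.mem_prod, mem_coe, mem_prodSolutions]
    refine ⟨h1 i, fun j => h1 _, fun j => h2 _, h3, h4, ?_⟩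
    have hpos : n i ≠ 0 := fun h => hI (h ▸ h1 i)
    rw [Fin.prod_univ_succAbove n i, Fin.prod_univ_succ n', ← h6, mul_assoc, mul_assoc] at h5
    exact Nat.eq_of_mul_eq_mul_left (Nat.pos_of_ne_zero hpos) h5
  · rintro ⟨n, n', m, m'⟩ ht ⟨p, p', q, q'⟩ hu h
    simp only [coe_filter, Set.mem_ofPred_eq] at ht hu
    simp only [Prod.mk.injEq] at h
    obtain ⟨h1, h2, h3, h4, h5⟩ := h
    have hn : n = p := by
      rw [← Fin.insertNth_self_removeNth i n, ← Fin.insertNth_self_removeNth i p, h1, h2]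
    have hn' : n' = p' := by
      rw [← Fin.cons_self_tail n', ← Fin.cons_self_tail p', h3, ← ht.2, ← hu.2, h1]
    rw [hn, hn', h4, h5]

theorem card_prodSolutions_succ_le {k l : ℕ} {I J : Finset ℕ} (hI : 0 ∉ I) :
    (prodSolutions (k + 1) l I J).card ≤
      (unmatchedSolutions k l I J).card + (k + 1) * (I.card * (prodSolutions k l I J).card) := by
  have hsub : prodSolutions (k + 1) l I J ⊆ unmatchedSolutions k l I J ∪
      univ.biUnion fun i => (prodSolutions (k + 1) l I J).filter fun t => t.1 i = t.2.1 0 := by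
    intro t ht
    by_cases h : ∀ i, t.1 i ≠ t.2.1 0
    · exact mem_union_left _ (mem_filter.2 ⟨ht, h⟩)
    · push Not at h
      obtain ⟨i, hi⟩ := h
      exact mem_union_right _ (mem_biUnion.2 ⟨i, mem_univ _, mem_filter.2 ⟨ht, hi⟩⟩)
  refine (card_le_card hsub).trans ((card_union_le _ _).trans (Nat.add_le_add_left ?_ _))
  refine card_biUnion_le.trans ((sum_le_sum fun i _ => card_filter_matched_le hI i).trans ?_)
  simp

/-- The elements of `I` which divide `∏ nᵢ * ∏ mⱼ` and differ from every `nᵢ`. -/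
def newDivisors {k l : ℕ} (I : Finset ℕ) (n : Fin k → ℕ) (m : Fin l → ℕ) : Finset ℕ :=
  I.filter fun M => M ∣ (∏ i, n i) * (∏ j, m j) ∧ ∀ i, n i ≠ M

theorem card_unmatchedSolutions_le {k l : ℕ} {I J : Finset ℕ} (hI : 0 ∉ I) (hJ : 0 ∉ J) :
    (unmatchedSolutions k l I J).card ≤
      ∑ n ∈ Fintype.piFinset fun _ : Fin (k + 1) => I, ∑ m ∈ Fintype.piFinset fun _ : Fin l => J,
        (newDivisors I n m).card * ((∏ i, n i) * (∏ j, m j)).divisors.card ^ (k + l) := by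
  rw [← sum_product']
  have key : ∀ p : (Fin (k + 1) → ℕ) × (Fin l → ℕ), (newDivisors I p.1 p.2).card *
      ((∏ i, p.1 i) * (∏ j, p.2 j)).divisors.card ^ (k + l) = (newDivisors I p.1 p.2 ×ˢ
        (Fintype.piFinset fun _ : Fin k => ((∏ i, p.1 i) * (∏ j, p.2 j)).divisors) ×ˢ
        (Fintype.piFinset fun _ : Fin l => ((∏ i, p.1 i) * (∏ j, p.2 j)).divisors)).card := by
    intro p
    simp [card_product, Fintype.card_piFinset, pow_add]
  simp_rw [key]
  rw [← card_sigma]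
  refine card_le_card_of_injOn
    (fun t => ⟨(t.1, t.2.2.1), (t.2.1 0, Fin.tail t.2.1, t.2.2.2)⟩) ?_ ?_
  · rintro ⟨n, n', m, m'⟩ ht
    simp only [unmatchedSolutions, coe_filter, Set.mem_ofPred_eq, mem_prodSolutions] at ht
    obtain ⟨⟨h1, h2, h3, h4, h5⟩, h6⟩ := ht
    have hne : (∏ i, n i) * (∏ j, m j) ≠ 0 := mul_ne_zero
      (prod_ne_zero_iff.2 fun i _ h => hI (h ▸ h1 i))
      (prod_ne_zero_iff.2 fun i _ h => hJ (h ▸ h3 i))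
    have hn' : ∀ i, n' i ∣ (∏ i, n i) * (∏ j, m j) := fun i =>
      h5 ▸ (dvd_prod_of_mem n' (mem_univ i)).mul_right _
    have hm' : ∀ i, m' i ∣ (∏ i, n i) * (∏ j, m j) := fun i =>
      h5 ▸ (dvd_prod_of_mem m' (mem_univ i)).mul_left _
    simp only [coe_sigma, Set.mem_sigma_iff, mem_coe, mem_product, Fintype.mem_piFinset,
      newDivisors, mem_filter, Nat.mem_divisors]
    exact ⟨⟨h1, h3⟩, ⟨h2 0, hn' 0, h6⟩, fun i => ⟨hn' _, hne⟩, fun i => ⟨hm' i, hne⟩⟩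
  · rintro ⟨n, n', m, m'⟩ - ⟨p, p', q, q'⟩ - h
    simp only [Sigma.mk.injEq, Prod.mk.injEq, heq_eq_eq] at h
    obtain ⟨⟨h1, h2⟩, h3, h4, h5⟩ := h
    have hn' : n' = p' := by
      rw [← Fin.cons_self_tail n', ← Fin.cons_self_tail p', h3, h4]
    rw [h1, hn', h2, h5]

theorem card_divisors_mul_le (a b : ℕ) :
    (a * b).divisors.card ≤ a.divisors.card * b.divisors.card := by
  rw [Nat.divisors_mul]
  exact card_mul_le

theorem card_divisors_prod_le {ι : Type*} (s : Finset ι) (f : ι → ℕ) :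
    (∏ i ∈ s, f i).divisors.card ≤ ∏ i ∈ s, (f i).divisors.card :=
  Finset.le_prod_of_submultiplicative (fun a : ℕ => a.divisors.card) (by simp)
    card_divisors_mul_le s f

theorem exists_prod_eq_of_dvd_prod {k : ℕ} (f : Fin k → ℕ) (M : ℕ) (h : M ∣ ∏ i, f i) :
    ∃ a : Fin k → ℕ, (∀ i, a i ∣ f i) ∧ ∏ i, a i = M := by
  induction k generalizing M with
  | zero => exact ⟨Fin.elim0, fun i => i.elim0, by simpa [eq_comm] using h⟩
  | succ k ih =>
    rw [Fin.prod_univ_succ] at h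
    obtain ⟨b, c, hb, hc, rfl⟩ := exists_dvd_and_dvd_of_dvd_mul h
    obtain ⟨a, ha, rfl⟩ := ih _ c hc
    exact ⟨Fin.cons b a, Fin.cases (by simpa using hb) (by simpa using ha),
      by simp [Fin.prod_univ_succ]⟩

theorem card_newDivisors_le {k l : ℕ} {I : Finset ℕ} {n : Fin k → ℕ} {m : Fin l → ℕ}
    (hn : ∀ i, n i ≠ 0) (hm : ∀ j, m j ≠ 0) :
    (newDivisors I n m).card ≤ ∑ b ∈ Fintype.piFinset fun j => (m j).divisors,
      ((Fintype.piFinset fun i => (n i).divisors).filter fun a =>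
        (∏ j, b j) * ∏ i, a i ∈ I ∧ ∀ i, n i ≠ (∏ j, b j) * ∏ i, a i).card := by
  have hsub : newDivisors I n m ⊆ (Fintype.piFinset fun j => (m j).divisors).biUnion fun b =>
      ((Fintype.piFinset fun i => (n i).divisors).filter fun a =>
        (∏ j, b j) * ∏ i, a i ∈ I ∧ ∀ i, n i ≠ (∏ j, b j) * ∏ i, a i).image
          fun a => (∏ j, b j) * ∏ i, a i := by
    intro M hM
    obtain ⟨hMI, hdvd, hne⟩ := mem_filter.1 hM
    obtain ⟨p, q, hp, hq, rfl⟩ := exists_dvd_and_dvd_of_dvd_mul hdvd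
    obtain ⟨a, ha, rfl⟩ := exists_prod_eq_of_dvd_prod n p hp
    obtain ⟨b, hb, rfl⟩ := exists_prod_eq_of_dvd_prod m q hq
    rw [mul_comm] at hMI hne ⊢
    simp only [mem_biUnion, mem_image, mem_filter, Fintype.mem_piFinset, Nat.mem_divisors]
    exact ⟨b, fun j => ⟨hb j, hm j⟩, a, ⟨fun i => ⟨ha i, hn i⟩, hMI, hne⟩, rfl⟩
  exact (card_le_card hsub).trans (card_biUnion_le.trans (sum_le_sum fun _ _ => card_image_le))

theorem card_multiples_ne_le {x H M a : ℕ} (ha : 0 < a) (haM : a ∣ M)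
    (hM : M ∈ Ioc x (x + H)) :
    ((Ioc x (x + H)).filter fun n => a ∣ n ∧ n ≠ M).card ≤ 2 * (H / a) := by
  have hsub : ((Ioc x (x + H)).filter fun n => a ∣ n ∧ n ≠ M) ⊆
      (Icc 1 (H / a)).image (fun j => M + a * j) ∪ (Icc 1 (H / a)).image (fun j => M - a * j) := by
    intro n hn
    simp only [mem_filter, mem_Ioc] at hn hM
    obtain ⟨hn, han, hne⟩ := hn
    simp only [mem_union, mem_image, mem_Icc, Nat.le_div_iff_mul_le ha]
    rcases lt_or_gt_of_ne hne with h | h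
    · obtain ⟨j, hj⟩ := Nat.dvd_sub haM han
      refine Or.inr ⟨j, ⟨Nat.pos_of_ne_zero ?_, ?_⟩, by omega⟩
      · rintro rfl
        simp at hj
        omega
      · rw [mul_comm]
        omega
    · obtain ⟨j, hj⟩ := Nat.dvd_sub han haM
      refine Or.inl ⟨j, ⟨Nat.pos_of_ne_zero ?_, ?_⟩, by omega⟩
      · rintro rfl
        simp at hj
        omega
      · rw [mul_comm]
        omega
  refine (card_le_card hsub).trans ((card_union_le _ _).trans ?_)
  have h1 := card_image_le (s := Icc 1 (H / a)) (f := fun j => M + a * j)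
  have h2 := card_image_le (s := Icc 1 (H / a)) (f := fun j => M - a * j)
  simp only [Nat.card_Icc] at h1 h2
  omega

theorem le_of_dvd_of_ne {x H M n a : ℕ} (hn : n ∈ Ioc x (x + H)) (hM : M ∈ Ioc x (x + H))
    (han : a ∣ n) (haM : a ∣ M) (hne : n ≠ M) : a ≤ H := by
  simp only [mem_Ioc] at hn hM
  rcases lt_or_gt_of_ne hne with h | h
  · exact (Nat.le_of_dvd (by omega) (Nat.dvd_sub haM han)).trans (by omega)
  · exact (Nat.le_of_dvd (by omega) (Nat.dvd_sub han haM)).trans (by omega)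

theorem sum_card_divisor_tuples_le (k X H e : ℕ) :
    ∑ x ∈ Icc 1 X, ∑ n ∈ Fintype.piFinset fun _ : Fin k => Ioc x (x + H),
      ((Fintype.piFinset fun i => (n i).divisors).filter fun a =>
        e * ∏ i, a i ∈ Ioc x (x + H) ∧ ∀ i, n i ≠ e * ∏ i, a i).card ≤
    H * (∑ a ∈ Icc 1 H, 2 * (H / a)) ^ k := by
  have step : ∀ x ∈ Icc 1 X, ∑ n ∈ Fintype.piFinset fun _ : Fin k => Ioc x (x + H),
      ((Fintype.piFinset fun i => (n i).divisors).filter fun a =>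
        e * ∏ i, a i ∈ Ioc x (x + H) ∧ ∀ i, n i ≠ e * ∏ i, a i).card ≤
      ∑ a ∈ Fintype.piFinset fun _ : Fin k => Icc 1 H,
        if e * ∏ i, a i ∈ Ioc x (x + H) then ∏ i, 2 * (H / a i) else 0 := by
    intro x _
    calc _ ≤ ∑ n ∈ Fintype.piFinset fun _ : Fin k => Ioc x (x + H),
          ((Fintype.piFinset fun _ : Fin k => Icc 1 H).filter fun a =>
            e * ∏ i, a i ∈ Ioc x (x + H) ∧ ∀ i, a i ∣ n i ∧ n i ≠ e * ∏ i, a i).card := by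
          refine sum_le_sum fun n hn => card_le_card fun a ha => ?_
          simp only [mem_filter, Fintype.mem_piFinset, Nat.mem_divisors] at ha hn
          obtain ⟨h1, h2, h3⟩ := ha
          refine mem_filter.2 ⟨Fintype.mem_piFinset.2 fun i => mem_Icc.2
            ⟨Nat.pos_of_ne_zero ?_, ?_⟩, h2, fun i => ⟨(h1 i).1, h3 i⟩⟩
          · exact ne_zero_of_dvd_ne_zero (h1 i).2 (h1 i).1
          · exact le_of_dvd_of_ne (hn i) h2 (h1 i).1
              ((dvd_prod_of_mem a (mem_univ i)).mul_left e) (h3 i)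
      _ = ∑ a ∈ Fintype.piFinset fun _ : Fin k => Icc 1 H,
          ((Fintype.piFinset fun _ : Fin k => Ioc x (x + H)).filter fun n =>
            e * ∏ i, a i ∈ Ioc x (x + H) ∧ ∀ i, a i ∣ n i ∧ n i ≠ e * ∏ i, a i).card := by
          simp_rw [card_filter]
          exact sum_comm
      _ ≤ _ := by
          refine sum_le_sum fun a ha => ?_
          split_ifs with h
          · have hsub : ((Fintype.piFinset fun _ : Fin k => Ioc x (x + H)).filter fun n =>
                e * ∏ i, a i ∈ Ioc x (x + H) ∧ ∀ i, a i ∣ n i ∧ n i ≠ e * ∏ i, a i) ⊆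
                Fintype.piFinset fun i =>
                  (Ioc x (x + H)).filter fun n => a i ∣ n ∧ n ≠ e * ∏ i, a i := by
              intro n hn
              simp only [mem_filter, Fintype.mem_piFinset] at hn ⊢
              exact fun i => ⟨hn.1 i, hn.2.2 i⟩
            refine (card_le_card hsub).trans ?_
            rw [Fintype.card_piFinset]
            refine prod_le_prod' fun i _ => card_multiples_ne_le ?_
              ((dvd_prod_of_mem a (mem_univ i)).mul_left e) h
            exact (mem_Icc.1 (Fintype.mem_piFinset.1 ha i)).1
          · simp [h]
  refine (sum_le_sum step).trans ?_
  rw [sum_comm, ← Fintype.card_fin k, ← card_univ, ← prod_const, prod_univ_sum, mul_sum, card_univ,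
    Fintype.card_fin]
  refine sum_le_sum fun a _ => ?_
  rw [← sum_filter, sum_const, smul_eq_mul]
  refine Nat.mul_le_mul_right _ ?_
  calc _ ≤ (Ico (e * ∏ i, a i - H) (e * ∏ i, a i)).card := by
        refine card_le_card fun x hx => ?_
        simp only [mem_filter, mem_Ioc, mem_Ico] at hx ⊢
        omega
    _ ≤ H := by
        rw [Nat.card_Ico]
        omega

theorem sum_card_newDivisors_le (k l X H : ℕ) :
    ∑ x ∈ Icc 1 X, ∑ y ∈ Icc 1 X, ∑ n ∈ Fintype.piFinset fun _ : Fin k => Ioc x (x + H),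
      ∑ m ∈ Fintype.piFinset fun _ : Fin l => Ioc y (y + H),
        (newDivisors (Ioc x (x + H)) n m).card ≤
    (∑ y ∈ Icc 1 X, ∑ m ∈ Fintype.piFinset fun _ : Fin l => Ioc y (y + H),
      ∏ j, (m j).divisors.card) * (H * (∑ a ∈ Icc 1 H, 2 * (H / a)) ^ k) := by
  calc _ ≤ ∑ x ∈ Icc 1 X, ∑ y ∈ Icc 1 X, ∑ n ∈ Fintype.piFinset fun _ : Fin k => Ioc x (x + H),
      ∑ m ∈ Fintype.piFinset fun _ : Fin l => Ioc y (y + H),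
        ∑ b ∈ Fintype.piFinset fun j => (m j).divisors,
          ((Fintype.piFinset fun i => (n i).divisors).filter fun a =>
            (∏ j, b j) * ∏ i, a i ∈ Ioc x (x + H) ∧
              ∀ i, n i ≠ (∏ j, b j) * ∏ i, a i).card := by
        refine sum_le_sum fun x _ => sum_le_sum fun y _ => sum_le_sum fun n hn =>
          sum_le_sum fun m hm => card_newDivisors_le (fun i => ?_) fun j => ?_
        · exact (Nat.zero_le x).trans_lt (mem_Ioc.1 (Fintype.mem_piFinset.1 hn i)).1 |>.ne'
        · exact (Nat.zero_le y).trans_lt (mem_Ioc.1 (Fintype.mem_piFinset.1 hm j)).1 |>.ne'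
    _ = ∑ y ∈ Icc 1 X, ∑ m ∈ Fintype.piFinset fun _ : Fin l => Ioc y (y + H),
        ∑ b ∈ Fintype.piFinset fun j => (m j).divisors,
          ∑ x ∈ Icc 1 X, ∑ n ∈ Fintype.piFinset fun _ : Fin k => Ioc x (x + H),
          ((Fintype.piFinset fun i => (n i).divisors).filter fun a =>
            (∏ j, b j) * ∏ i, a i ∈ Ioc x (x + H) ∧
              ∀ i, n i ≠ (∏ j, b j) * ∏ i, a i).card := by
        rw [sum_comm]
        refine sum_congr rfl fun y _ => ?_
        simp_rw [sum_comm (t := Fintype.piFinset fun _ : Fin l => Ioc y (y + H))]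
        refine sum_congr rfl fun m _ => ?_
        simp_rw [sum_comm (t := Fintype.piFinset fun j => (m j).divisors)]
    _ ≤ _ := by
        simp_rw [sum_mul]
        refine sum_le_sum fun y _ => sum_le_sum fun m _ => ?_
        refine (sum_le_sum fun b _ => sum_card_divisor_tuples_le k X H _).trans ?_
        rw [sum_const, Fintype.card_piFinset, smul_eq_mul]

theorem sum_card_divisors_pow_div_le (A Y : ℕ) :
    ∑ n ∈ Icc 1 Y, (n.divisors.card : ℝ) ^ A / n ≤ (1 + Real.log Y) ^ 2 ^ A := by
  induction A with
  | zero =>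
    have h := harmonic_le_one_add_log Y
    rw [harmonic_eq_sum_Icc] at h
    simpa using h
  | succ A ih =>
    have hle : ∑ n ∈ Icc 1 Y, (n.divisors.card : ℝ) ^ (A + 1) / n ≤
        (∑ n ∈ Icc 1 Y, (n.divisors.card : ℝ) ^ A / n) ^ 2 := by
      calc _ = ∑ n ∈ Icc 1 Y, ∑ p ∈ n.divisorsAntidiagonal,
            ((p.1 * p.2).divisors.card : ℝ) ^ A / (p.1 * p.2 : ℕ) := by
            refine sum_congr rfl fun n _ => ?_
            rw [sum_congr rfl fun p hp => by rw [(Nat.mem_divisorsAntidiagonal.1 hp).1],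
              sum_const, nsmul_eq_mul, ← Nat.map_div_right_divisors, card_map]
            ring
        _ = ∑ p ∈ (Icc 1 Y).biUnion fun n => n.divisorsAntidiagonal,
            ((p.1 * p.2).divisors.card : ℝ) ^ A / (p.1 * p.2 : ℕ) := by
            rw [sum_biUnion]
            intro a _ b _ hab
            refine disjoint_left.2 fun p hp hq => hab ?_
            rw [← (Nat.mem_divisorsAntidiagonal.1 hp).1, (Nat.mem_divisorsAntidiagonal.1 hq).1]
        _ ≤ ∑ p ∈ Icc 1 Y ×ˢ Icc 1 Y,
            ((p.1 * p.2).divisors.card : ℝ) ^ A / (p.1 * p.2 : ℕ) := by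
            refine sum_le_sum_of_subset_of_nonneg (fun p hp => ?_) fun _ _ _ => by positivity
            simp only [mem_biUnion, mem_Icc, Nat.mem_divisorsAntidiagonal] at hp
            obtain ⟨n, ⟨h1, h2⟩, rfl, h3⟩ := hp
            obtain ⟨h4, h5⟩ := mul_ne_zero_iff.1 h3
            simp only [mem_product, mem_Icc]
            exact ⟨⟨Nat.pos_of_ne_zero h4, (Nat.le_mul_of_pos_right _ (Nat.pos_of_ne_zero h5)).trans
              h2⟩, Nat.pos_of_ne_zero h5, (Nat.le_mul_of_pos_left _ (Nat.pos_of_ne_zero h4)).trans h2⟩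
        _ ≤ ∑ p ∈ Icc 1 Y ×ˢ Icc 1 Y, ((p.1.divisors.card : ℝ) ^ A / p.1) *
            ((p.2.divisors.card : ℝ) ^ A / p.2) := by
            refine sum_le_sum fun p _ => ?_
            rw [div_mul_div_comm, ← mul_pow, ← Nat.cast_mul, ← Nat.cast_mul]
            gcongr
            exact card_divisors_mul_le _ _
        _ = _ := by rw [sq, sum_mul_sum, sum_product]
    refine hle.trans ?_
    rw [pow_succ 2 A, pow_mul]
    exact pow_le_pow_left₀ (sum_nonneg fun _ _ => by positivity) ih 2

theorem sum_card_divisors_pow_le (A Y : ℕ) :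
    ∑ n ∈ Icc 1 Y, (n.divisors.card : ℝ) ^ A ≤ Y * (1 + Real.log Y) ^ 2 ^ A := by
  refine le_trans ?_ (mul_le_mul_of_nonneg_left (sum_card_divisors_pow_div_le A Y) Y.cast_nonneg)
  rw [mul_sum]
  refine sum_le_sum fun n hn => ?_
  obtain ⟨h1, h2⟩ := mem_Icc.1 hn
  have h1' : (0 : ℝ) < n := by exact_mod_cast h1
  rw [mul_div_assoc', le_div_iff₀ h1', mul_comm]
  gcongr

theorem sum_prod_card_divisors_pow_le {X H : ℕ} (hX : 1 ≤ X) (hHX : H ≤ X) (l A : ℕ) :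
    ∑ x ∈ Icc 1 X, ∑ m ∈ Fintype.piFinset fun _ : Fin l => Ioc x (x + H),
      ∏ j, ((m j).divisors.card : ℝ) ^ A ≤
    2 * X * H ^ l * (1 + Real.log (2 * X)) ^ 2 ^ (A * l) := by
  have hX' : (1 : ℝ) ≤ X := by exact_mod_cast hX
  have hlog : 0 ≤ Real.log (2 * X) := Real.log_nonneg (by linarith)
  have hL : 1 ≤ (1 + Real.log (2 * X)) ^ 2 ^ (A * l) := one_le_pow₀ (by linarith)
  cases l with
  | zero =>
    simp only [univ_eq_empty, prod_empty, sum_const, Fintype.card_piFinset, pow_zero, Nat.card_Icc]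
    simp at hL ⊢
    nlinarith
  | succ l =>
    calc _ = ∑ x ∈ Icc 1 X, (∑ m ∈ Ioc x (x + H), (m.divisors.card : ℝ) ^ A) ^ (l + 1) := by
          refine sum_congr rfl fun x _ => ?_
          rw [← prod_univ_sum (fun _ => Ioc x (x + H)) fun _ m => (m.divisors.card : ℝ) ^ A]
          simp
      _ ≤ ∑ x ∈ Icc 1 X, (H : ℝ) ^ l *
          ∑ m ∈ Ioc x (x + H), ((m.divisors.card : ℝ) ^ A) ^ (l + 1) := by
          refine sum_le_sum fun x _ => ?_
          have h := pow_sum_le_card_mul_sum_pow (s := Ioc x (x + H))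
            (f := fun m => (m.divisors.card : ℝ) ^ A) (fun _ _ => by positivity) l
          simpa using h
      _ = (H : ℝ) ^ l * ∑ h ∈ Ioc 0 H, ∑ x ∈ Icc 1 X,
          ((x + h).divisors.card : ℝ) ^ (A * (l + 1)) := by
          rw [← mul_sum, sum_comm]
          congr 1
          refine sum_congr rfl fun x _ => ?_
          rw [← add_zero x, add_assoc x 0 H, zero_add, ← map_add_left_Ioc, sum_map]
          simp [pow_mul]
      _ ≤ (H : ℝ) ^ l * ∑ h ∈ Ioc 0 H,
          (2 * X : ℕ) * (1 + Real.log (2 * X : ℕ)) ^ 2 ^ (A * (l + 1)) := by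
          refine mul_le_mul_of_nonneg_left (sum_le_sum fun h hh => ?_) (by positivity)
          refine le_trans ?_ (sum_card_divisors_pow_le (A * (l + 1)) (2 * X))
          refine (sum_map (Icc 1 X) (addRightEmbedding h)
            fun n => (n.divisors.card : ℝ) ^ (A * (l + 1))).symm.trans_le ?_
          rw [map_add_right_Icc]
          refine sum_le_sum_of_subset_of_nonneg (fun n hn => ?_) fun _ _ _ => by positivity
          simp only [mem_Icc, mem_Ioc] at hn hh ⊢
          omega
      _ = _ := by
          simp
          ring

theorem mul_pow_le_add_inv_mul_pow {g D Q V : ℝ} (hD : 0 ≤ D) (hg : 0 ≤ g) (hgD : g ≤ D)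
    (hDQ : D ≤ Q) (hV : 0 < V) (K : ℕ) : g * D ^ K ≤ V * g + V⁻¹ * Q ^ (2 * K + 1) := by
  have hQ : 0 ≤ Q := hD.trans hDQ
  rcases le_total (D ^ K) V with h | h
  · have h1 : g * D ^ K ≤ V * g := by
      rw [mul_comm]
      gcongr
    have h2 : 0 ≤ V⁻¹ * Q ^ (2 * K + 1) := by positivity
    linarith
  · have h1 : g * D ^ K ≤ V⁻¹ * Q ^ (2 * K + 1) := by
      rw [inv_mul_eq_div, le_div_iff₀ hV]
      calc g * D ^ K * V ≤ D * D ^ K * D ^ K := by gcongr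
        _ = D ^ (2 * K + 1) := by ring
        _ ≤ _ := by gcongr
    have h2 : 0 ≤ V * g := by positivity
    linarith

theorem card_newDivisors_mul_pow_le {k l : ℕ} {I : Finset ℕ} {n : Fin k → ℕ} {m : Fin l → ℕ}
    (hn : ∀ i, n i ≠ 0) (hm : ∀ j, m j ≠ 0) (K : ℕ) {V : ℝ} (hV : 0 < V) :
    ((newDivisors I n m).card : ℝ) * (((∏ i, n i) * (∏ j, m j)).divisors.card : ℝ) ^ K ≤
      V * (newDivisors I n m).card + V⁻¹ * ((∏ i, ((n i).divisors.card : ℝ) ^ (2 * K + 1)) *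
        ∏ j, ((m j).divisors.card : ℝ) ^ (2 * K + 1)) := by
  have hP0 : (∏ i, n i) * (∏ j, m j) ≠ 0 :=
    mul_ne_zero (prod_ne_zero_iff.2 fun i _ => hn i) (prod_ne_zero_iff.2 fun j _ => hm j)
  have hsub : newDivisors I n m ⊆ ((∏ i, n i) * (∏ j, m j)).divisors := by
    intro M hM
    exact Nat.mem_divisors.2 ⟨(mem_filter.1 hM).2.1, hP0⟩
  have hd : (((∏ i, n i) * (∏ j, m j)).divisors.card : ℝ) ≤
      (∏ i, ((n i).divisors.card : ℝ)) * ∏ j, ((m j).divisors.card : ℝ) := by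
    exact_mod_cast (card_divisors_mul_le _ _).trans
      (Nat.mul_le_mul (card_divisors_prod_le _ _) (card_divisors_prod_le _ _))
  rw [prod_pow, prod_pow, ← mul_pow]
  exact mul_pow_le_add_inv_mul_pow (Nat.cast_nonneg _) (Nat.cast_nonneg _)
    (Nat.cast_le.2 (card_le_card hsub)) hd hV K

theorem sum_sum_mul_eq {α β : Type*} (S : Finset ℕ) (s : ℕ → Finset α) (t : ℕ → Finset β)
    (f : α → ℝ) (g : β → ℝ) :
    ∑ x ∈ S, ∑ y ∈ S, ∑ n ∈ s x, ∑ m ∈ t y, f n * g m =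
      (∑ x ∈ S, ∑ n ∈ s x, f n) * ∑ y ∈ S, ∑ m ∈ t y, g m := by
  simp_rw [sum_mul_sum]

theorem sum_two_mul_div_le {X H : ℕ} (hH : 1 ≤ H) (hHX : H ≤ X) :
    ((∑ a ∈ Icc 1 H, 2 * (H / a) : ℕ) : ℝ) ≤ 2 * H * (1 + Real.log (2 * X)) := by
  have h := harmonic_le_one_add_log H
  rw [harmonic_eq_sum_Icc] at h
  push_cast at h ⊢
  have hHr : (1 : ℝ) ≤ H := by exact_mod_cast hH
  have hle : (H : ℝ) ≤ X := by exact_mod_cast hHX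
  calc _ ≤ ∑ a ∈ Icc 1 H, 2 * (H : ℝ) * (a : ℝ)⁻¹ := by
        refine sum_le_sum fun a _ => ?_
        rw [mul_assoc, ← div_eq_mul_inv]
        gcongr
        exact Nat.cast_div_le
    _ ≤ _ := by
        rw [← mul_sum]
        refine mul_le_mul_of_nonneg_left (h.trans ?_) (by positivity)
        have := Real.log_le_log (by linarith) (show (H : ℝ) ≤ 2 * X by linarith)
        linarith

theorem sum_card_unmatchedSolutions_le (k l : ℕ) : ∃ C B : ℕ, ∀ X H : ℕ, ∀ V : ℝ,
    1 ≤ H → H ≤ X → 0 < V →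
    ∑ x ∈ Icc 1 X, ∑ y ∈ Icc 1 X,
      ((unmatchedSolutions k l (Ioc x (x + H)) (Ioc y (y + H))).card : ℝ) ≤
    (X : ℝ) ^ 2 * (H : ℝ) ^ (k + 1 + l) *
      (C * (1 + Real.log (2 * X)) ^ B * (V * H / X + 1 / V)) := by
  set A := 2 * (k + l) + 1
  refine ⟨2 ^ (k + 2), 2 ^ (1 * l) + (k + 1) + 2 ^ (A * (k + 1)) + 2 ^ (A * l),
    fun X H V hH hHX hV => ?_⟩
  have hX : 1 ≤ X := hH.trans hHX
  have hXr : (1 : ℝ) ≤ X := by exact_mod_cast hX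
  have hHr : (1 : ℝ) ≤ H := by exact_mod_cast hH
  set L := 1 + Real.log (2 * X)
  have hL1 : 1 ≤ L := by
    have := Real.log_nonneg (show (1 : ℝ) ≤ 2 * X by linarith)
    linarith
  have hcount : (∑ x ∈ Icc 1 X, ∑ y ∈ Icc 1 X,
      ∑ n ∈ Fintype.piFinset fun _ : Fin (k + 1) => Ioc x (x + H),
      ∑ m ∈ Fintype.piFinset fun _ : Fin l => Ioc y (y + H),
        ((newDivisors (Ioc x (x + H)) n m).card : ℝ)) ≤
      2 * X * H ^ l * L ^ 2 ^ (1 * l) * (H * (2 * H * L) ^ (k + 1)) := by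
    have h1 := sum_card_newDivisors_le (k + 1) l X H
    have h2 := sum_prod_card_divisors_pow_le hX hHX l 1
    have h3 := sum_two_mul_div_le hH hHX
    simp only [pow_one] at h2
    have h1' := (Nat.cast_le (α := ℝ)).2 h1
    push_cast at h1' h3
    refine h1'.trans ?_
    gcongr
  have hweight : (∑ x ∈ Icc 1 X, ∑ y ∈ Icc 1 X,
      ∑ n ∈ Fintype.piFinset fun _ : Fin (k + 1) => Ioc x (x + H),
      ∑ m ∈ Fintype.piFinset fun _ : Fin l => Ioc y (y + H),
        (∏ i, ((n i).divisors.card : ℝ) ^ A) * ∏ j, ((m j).divisors.card : ℝ) ^ A) ≤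
      (2 * X * H ^ (k + 1) * L ^ 2 ^ (A * (k + 1))) * (2 * X * H ^ l * L ^ 2 ^ (A * l)) := by
    have h1 := sum_prod_card_divisors_pow_le hX hHX (k + 1) A
    have h2 := sum_prod_card_divisors_pow_le hX hHX l A
    rw [sum_sum_mul_eq (Icc 1 X) (fun x => Fintype.piFinset fun _ : Fin (k + 1) => Ioc x (x + H))
      (fun y => Fintype.piFinset fun _ : Fin l => Ioc y (y + H))
      (fun n => ∏ i, ((n i).divisors.card : ℝ) ^ A) fun m => ∏ j, ((m j).divisors.card : ℝ) ^ A]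
    refine mul_le_mul h1 h2 (sum_nonneg fun _ _ => sum_nonneg fun _ _ => prod_nonneg fun _ _ =>
      pow_nonneg (Nat.cast_nonneg _) _) ?_
    have hL0 : 0 ≤ L := by linarith
    exact mul_nonneg (by positivity) (pow_nonneg hL0 _)
  generalize 2 ^ (1 * l) = b₁ at hcount ⊢
  generalize 2 ^ (A * (k + 1)) = b₂ at hweight ⊢
  generalize 2 ^ (A * l) = b₃ at hweight ⊢
  calc _ ≤ ∑ x ∈ Icc 1 X, ∑ y ∈ Icc 1 X,
      ∑ n ∈ Fintype.piFinset fun _ : Fin (k + 1) => Ioc x (x + H),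
      ∑ m ∈ Fintype.piFinset fun _ : Fin l => Ioc y (y + H),
        (V * ((newDivisors (Ioc x (x + H)) n m).card : ℝ) +
          V⁻¹ * ((∏ i, ((n i).divisors.card : ℝ) ^ A) * ∏ j, ((m j).divisors.card : ℝ) ^ A)) := by
        refine sum_le_sum fun x _ => sum_le_sum fun y _ => ?_
        have h := card_unmatchedSolutions_le (k := k) (l := l) (I := Ioc x (x + H))
          (J := Ioc y (y + H)) (by simp) (by simp)
        have h' := (Nat.cast_le (α := ℝ)).2 h
        push_cast at h'
        refine h'.trans ?_
        refine sum_le_sum fun n hn => sum_le_sum fun m hm => ?_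
        exact_mod_cast card_newDivisors_mul_pow_le
          (fun i => (Nat.zero_le x).trans_lt (mem_Ioc.1 (Fintype.mem_piFinset.1 hn i)).1 |>.ne')
          (fun j => (Nat.zero_le y).trans_lt (mem_Ioc.1 (Fintype.mem_piFinset.1 hm j)).1 |>.ne')
          (k + l) hV
    _ ≤ V * (2 * X * H ^ l * L ^ b₁ * (H * (2 * H * L) ^ (k + 1))) +
        V⁻¹ * ((2 * X * H ^ (k + 1) * L ^ b₂) *
          (2 * X * H ^ l * L ^ b₃)) := by
        refine le_trans (le_of_eq ?_) (add_le_add (mul_le_mul_of_nonneg_left hcount hV.le)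
          (mul_le_mul_of_nonneg_left hweight (inv_nonneg.2 hV.le)))
        simp only [sum_add_distrib, mul_sum]
    _ = (X : ℝ) ^ 2 * (H : ℝ) ^ (k + 1 + l) *
        (2 ^ (k + 2) * L ^ (b₁ + (k + 1)) * (V * H / X) +
          4 * L ^ (b₂ + b₃) * (1 / V)) := by
        field_simp
        ring_nf
    _ ≤ _ := by
        rw [mul_add _ (V * H / X)]
        push_cast
        have h4 : (4 : ℝ) ≤ 2 ^ (k + 2) := by
          have : (1 : ℝ) ≤ 2 ^ k := one_le_pow₀ (by norm_num)
          rw [pow_add]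
          linarith
        have hp : L ^ (b₁ + (k + 1)) ≤ L ^ (b₁ + (k + 1) + b₂ + b₃) :=
          pow_le_pow_right₀ hL1 (by omega)
        have hq : L ^ (b₂ + b₃) ≤ L ^ (b₁ + (k + 1) + b₂ + b₃) :=
          pow_le_pow_right₀ hL1 (by omega)
        gcongr

/-- An upper bound for the mean of the number of solutions over pairs of intervals of length `H`
whose left end points are at most `X`. -/
def MeanSolutionsBound (k l : ℕ) : Prop :=
  ∃ C B : ℕ, ∀ X H : ℕ, ∀ V : ℝ, 1 ≤ H → H ≤ X → 0 < V →
    ∑ x ∈ Icc 1 X, ∑ y ∈ Icc 1 X,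
      ((prodSolutions k l (Ioc x (x + H)) (Ioc y (y + H))).card : ℝ) ≤
    (X : ℝ) ^ 2 * (H : ℝ) ^ (k + l) * (k.factorial * l.factorial +
      C * (1 + Real.log (2 * X)) ^ B * (V * H / X + 1 / V))

theorem MeanSolutionsBound.symm {k l : ℕ} (h : MeanSolutionsBound k l) :
    MeanSolutionsBound l k := by
  obtain ⟨C, B, h⟩ := h
  refine ⟨C, B, fun X H V hH hHX hV => ?_⟩
  have h1 := h X H V hH hHX hV
  rw [sum_comm] at h1
  simp_rw [card_prodSolutions_swap k l] at h1
  rwa [add_comm l k, mul_comm (l.factorial : ℝ)]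

theorem meanSolutionsBound_zero_zero : MeanSolutionsBound 0 0 := by
  refine ⟨0, 0, fun X H V _ _ _ => ?_⟩
  have h : ∀ I J : Finset ℕ, (prodSolutions 0 0 I J).card ≤ 1 := fun I J =>
    card_le_one.2 fun a _ b _ => Subsingleton.elim a b
  calc _ ≤ ∑ x ∈ Icc 1 X, ∑ y ∈ Icc 1 X, (1 : ℝ) := by
        refine sum_le_sum fun x _ => sum_le_sum fun y _ => ?_
        exact_mod_cast h _ _
    _ = _ := by simp [sq]

theorem MeanSolutionsBound.succ {k l : ℕ} (h : MeanSolutionsBound k l) :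
    MeanSolutionsBound (k + 1) l := by
  obtain ⟨C, B, h⟩ := h
  obtain ⟨C', B', h'⟩ := sum_card_unmatchedSolutions_le k l
  refine ⟨C' + (k + 1) * C, B' + B, fun X H V hH hHX hV => ?_⟩
  have hXr : (1 : ℝ) ≤ X := by exact_mod_cast hH.trans hHX
  have hL1 : 1 ≤ 1 + Real.log (2 * X) := by
    have := Real.log_nonneg (show (1 : ℝ) ≤ 2 * X by linarith)
    linarith
  calc _ ≤ ∑ x ∈ Icc 1 X, ∑ y ∈ Icc 1 X,
        (((unmatchedSolutions k l (Ioc x (x + H)) (Ioc y (y + H))).card : ℝ) + (k + 1) *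
          (H * ((prodSolutions k l (Ioc x (x + H)) (Ioc y (y + H))).card : ℝ))) := by
        refine sum_le_sum fun x _ => sum_le_sum fun y _ => ?_
        have h1 := card_prodSolutions_succ_le (k := k) (l := l) (I := Ioc x (x + H))
          (J := Ioc y (y + H)) (by simp)
        rw [Nat.card_Ioc, Nat.add_sub_cancel_left] at h1
        exact_mod_cast h1
    _ ≤ (X : ℝ) ^ 2 * (H : ℝ) ^ (k + 1 + l) *
          (C' * (1 + Real.log (2 * X)) ^ B' * (V * H / X + 1 / V)) +
        (k + 1) * (H * ((X : ℝ) ^ 2 * (H : ℝ) ^ (k + l) * (k.factorial * l.factorial +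
          C * (1 + Real.log (2 * X)) ^ B * (V * H / X + 1 / V)))) := by
        simp_rw [sum_add_distrib, ← mul_sum]
        gcongr
        · exact h' X H V hH hHX hV
        · exact h X H V hH hHX hV
    _ = (X : ℝ) ^ 2 * (H : ℝ) ^ (k + 1 + l) * ((k + 1).factorial * l.factorial +
          (C' * (1 + Real.log (2 * X)) ^ B' + (k + 1) * C * (1 + Real.log (2 * X)) ^ B) *
            (V * H / X + 1 / V)) := by
        rw [Nat.factorial_succ]
        push_cast
        ring
    _ ≤ _ := by
        push_cast
        rw [add_mul (C' : ℝ)]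
        gcongr <;> first | exact hL1 | omega

theorem meanSolutionsBound_zero_right (k : ℕ) : MeanSolutionsBound k 0 := by
  induction k with
  | zero => exact meanSolutionsBound_zero_zero
  | succ k ih => exact ih.succ

theorem meanSolutionsBound (k l : ℕ) : MeanSolutionsBound k l := by
  induction k with
  | zero => exact (meanSolutionsBound_zero_right l).symm
  | succ k ih => exact ih.succ

theorem descFactorial_sq_mul_le_crossCount (k x₁ x₂ H : ℕ) :
    H.descFactorial k ^ 2 * k.factorial ^ 2 ≤ crossCount k x₁ x₂ H := by
  have hcard : H.descFactorial k ^ 2 * k.factorial ^ 2 = (univ : Finset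
      ((Fin k ↪ Fin H) × Equiv.Perm (Fin k) × (Fin k ↪ Fin H) × Equiv.Perm (Fin k))).card := by
    simp only [card_univ, Fintype.card_prod, Fintype.card_embedding_eq, Fintype.card_fin,
      Fintype.card_perm]
    ring
  rw [crossCount_eq_card, hcard]
  refine card_le_card_of_injOn (fun t => (fun i => x₁ + 1 + t.1 i, fun i => x₁ + 1 + t.1 (t.2.1 i),
    fun i => x₂ + 1 + t.2.2.1 i, fun i => x₂ + 1 + t.2.2.1 (t.2.2.2 i))) ?_ ?_
  · rintro ⟨f, σ, g, τ⟩ -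
    simp only [mem_coe, mem_prodSolutions, mem_Ioc]
    refine ⟨fun i => ?_, fun i => ?_, fun i => ?_, fun i => ?_, ?_⟩
    · have := (f i).isLt
      omega
    · have := (f (σ i)).isLt
      omega
    · have := (g i).isLt
      omega
    · have := (g (τ i)).isLt
      omega
    · rw [Equiv.prod_comp σ fun i => x₁ + 1 + (f i : ℕ),
        Equiv.prod_comp τ fun i => x₂ + 1 + (g i : ℕ)]
  · rintro ⟨f, σ, g, τ⟩ - ⟨f', σ', g', τ'⟩ - h
    simp only [Prod.mk.injEq, funext_iff, add_right_inj, Fin.val_inj] at h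
    obtain ⟨h1, h2, h3, h4⟩ := h
    obtain rfl : f = f' := DFunLike.ext _ _ h1
    obtain rfl : g = g' := DFunLike.ext _ _ h3
    obtain rfl : σ = σ' := Equiv.ext fun i => f.injective (h2 i)
    obtain rfl : τ = τ' := Equiv.ext fun i => g.injective (h4 i)
    rfl

open Filter Topology

theorem tendsto_descFactorial_div_pow (k : ℕ) :
    Tendsto (fun N : ℕ => (N.descFactorial k : ℝ) / (N : ℝ) ^ k) atTop (𝓝 1) := by
  refine (Asymptotics.isEquivalent_iff_tendsto_one ?_).1 (isEquivalent_descFactorial k)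
  filter_upwards [eventually_ge_atTop 1] with N hN
  have : (N : ℝ) ≠ 0 := by positivity
  positivity

theorem mean_error_le {B X H : ℕ} (hlog : 1 ≤ Real.log X)
    (hHX : (H : ℝ) ≤ X * Real.log X ^ (-((2 * B + 2 : ℕ) : ℝ))) :
    (1 + Real.log (2 * X)) ^ B * ((1 + Real.log (2 * X)) ^ (B + 1) * H / X +
      1 / (1 + Real.log (2 * X)) ^ (B + 1)) ≤ (3 ^ (2 * B + 1) + 1) / Real.log X := by
  have hX : 0 < (X : ℝ) := by
    rcases Nat.eq_zero_or_pos X with rfl | h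
    · simp at hlog
      linarith
    · exact_mod_cast h
  have hX2 : 2 ≤ (X : ℝ) := by
    have := Real.log_le_sub_one_of_pos hX
    linarith
  have hmul : Real.log (2 * X) = Real.log 2 + Real.log X := Real.log_mul (by norm_num) hX.ne'
  have h2 : 0 ≤ Real.log 2 := Real.log_nonneg (by norm_num)
  have h2' : Real.log 2 ≤ Real.log X := Real.log_le_log (by norm_num) hX2
  set ℓ := Real.log X
  set L := 1 + Real.log (2 * X)
  have hL : L ≤ 3 * ℓ := by linarith
  have hL' : ℓ ≤ L := by linarith
  have hLpos : 0 < L := by linarith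
  have hlpos : 0 < ℓ := by linarith
  have hHX' : (H : ℝ) / X ≤ 1 / ℓ ^ (2 * B + 2) := by
    rw [Real.rpow_neg hlpos.le, Real.rpow_natCast] at hHX
    rw [div_le_iff₀ hX, one_div, mul_comm]
    exact hHX
  calc L ^ B * (L ^ (B + 1) * H / X + 1 / L ^ (B + 1)) = L ^ (2 * B + 1) * (H / X) + 1 / L := by
        field_simp
        ring
    _ ≤ (3 * ℓ) ^ (2 * B + 1) * (1 / ℓ ^ (2 * B + 2)) + 1 / ℓ := by gcongr
    _ = _ := by
        field_simp
        ring

/-- for every `k ≥ 1` there is `c_k > 0` such that for every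
`H : ℕ → ℕ` with `H(X) → ∞` and `H(X) ≤ X·(log X)^{−c_k}` for all large `X`,
`((1/X²) ∑_{x₁=1}^{X} ∑_{x₂=1}^{X} T(x₁,x₂) − k!²·H(X)^{2k}) / H(X)^{2k} → 0`. -/
theorem stmt17 (k : ℕ) (hk : 1 ≤ k) :
    ∃ c : ℝ, 0 < c ∧ ∀ H : ℕ → ℕ,
      Filter.Tendsto H Filter.atTop Filter.atTop →
      (∀ᶠ X in Filter.atTop, (H X : ℝ) ≤ (X : ℝ) * Real.log X ^ (-c)) →
      Filter.Tendsto (fun X : ℕ =>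
        ((1 / (X : ℝ) ^ 2) * (∑ x₁ ∈ Finset.Icc 1 X, ∑ x₂ ∈ Finset.Icc 1 X,
            (crossCount k x₁ x₂ (H X) : ℝ))
          - ((k.factorial : ℝ)) ^ 2 * (H X : ℝ) ^ (2 * k)) / (H X : ℝ) ^ (2 * k))
        Filter.atTop (nhds 0) := by
  obtain ⟨C, B, hbound⟩ := meanSolutionsBound k k
  refine ⟨((2 * B + 2 : ℕ) : ℝ), by positivity, fun H hH hle => ?_⟩
  have hlogtop : Tendsto (fun X : ℕ => Real.log X) atTop atTop :=
    Real.tendsto_log_atTop.comp tendsto_natCast_atTop_atTop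
  have hlower : Tendsto (fun X : ℕ => (k.factorial : ℝ) ^ 2 *
      (((H X).descFactorial k : ℝ) / (H X : ℝ) ^ k) ^ 2 - (k.factorial : ℝ) ^ 2) atTop (𝓝 0) := by
    have h := ((((tendsto_descFactorial_div_pow k).comp hH).pow 2).const_mul
      ((k.factorial : ℝ) ^ 2)).sub_const ((k.factorial : ℝ) ^ 2)
    simpa using h
  have hupper : Tendsto (fun X : ℕ => (C : ℝ) * ((3 ^ (2 * B + 1) + 1) / Real.log X)) atTop
      (𝓝 0) := by
    simpa using (hlogtop.const_div_atTop ((3 : ℝ) ^ (2 * B + 1) + 1)).const_mul (C : ℝ)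
  refine tendsto_of_tendsto_of_tendsto_of_le_of_le' hlower hupper ?_ ?_
  · filter_upwards [hH.eventually_ge_atTop 1, eventually_ge_atTop 1] with X hHpos hXpos
    have hX : (0 : ℝ) < X := by exact_mod_cast hXpos
    have hHr : (0 : ℝ) < H X := by exact_mod_cast hHpos
    have hsum : (X : ℝ) ^ 2 * (((H X).descFactorial k : ℝ) ^ 2 * (k.factorial : ℝ) ^ 2) ≤
        ∑ x₁ ∈ Icc 1 X, ∑ x₂ ∈ Icc 1 X, (crossCount k x₁ x₂ (H X) : ℝ) := by
      calc _ = ∑ x₁ ∈ Icc 1 X, ∑ x₂ ∈ Icc 1 X,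
            (((H X).descFactorial k : ℝ) ^ 2 * (k.factorial : ℝ) ^ 2) := by
            simp only [sum_const, Nat.card_Icc, Nat.add_sub_cancel, nsmul_eq_mul]
            ring
        _ ≤ _ := sum_le_sum fun x₁ _ => sum_le_sum fun x₂ _ => by
            exact_mod_cast descFactorial_sq_mul_le_crossCount k x₁ x₂ (H X)
    rw [le_div_iff₀ (by positivity), sub_mul]
    refine sub_le_sub_right ?_ _
    rw [one_div, inv_mul_eq_div, le_div_iff₀ (by positivity)]
    refine le_trans (le_of_eq ?_) hsum
    field_simp
    ring
  · filter_upwards [hH.eventually_ge_atTop 1, hle, hlogtop.eventually_ge_atTop 1,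
      eventually_ge_atTop 1] with X hHpos hHX hlog hXpos
    have hX : (1 : ℝ) ≤ X := by exact_mod_cast hXpos
    have hHr : (0 : ℝ) < H X := by exact_mod_cast hHpos
    have hHleX : H X ≤ X := by
      have h : (H X : ℝ) ≤ X * 1 := hHX.trans (mul_le_mul_of_nonneg_left
        (Real.rpow_le_one_of_one_le_of_nonpos hlog (by simp only [neg_nonpos]; positivity))
        (by positivity))
      rw [mul_one] at h
      exact_mod_cast h
    have hV : 0 < (1 + Real.log (2 * X)) ^ (B + 1) := by
      have := Real.log_nonneg (show (1 : ℝ) ≤ 2 * X by linarith)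
      positivity
    have hsum := hbound X (H X) _ hHpos hHleX hV
    simp_rw [← crossCount_eq_card] at hsum
    have herr := mul_le_mul_of_nonneg_left (mean_error_le hlog hHX) (Nat.cast_nonneg (α := ℝ) C)
    rw [div_le_iff₀ (by positivity), sub_le_iff_le_add, one_div, inv_mul_eq_div,
      div_le_iff₀ (by positivity)]
    refine hsum.trans ?_
    rw [mul_assoc (C : ℝ), ← two_mul k]
    calc _ ≤ (X : ℝ) ^ 2 * (H X : ℝ) ^ (2 * k) * (k.factorial * k.factorial +
          C * ((3 ^ (2 * B + 1) + 1) / Real.log X)) := by gcongr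
      _ = _ := by ring
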